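/- Suppose 1/s₁ + 1/s₂ > 1. Let x*_l = (s₁−1+pa−2ra)/(2(s₁−1+pa)) and x*_r = (s₂s₁−s₂+(2rs₁−q+ps₂+qs₁)a+(2rp+pq)a²)/(2(s₁−1+pa)(s₂+qa)). Then for all sufficiently small a > 0: (i) x*_l is a fixed point of W_a lying in the domain of the second branch; (ii) W_a(x*_r) = x*_l with x*_r in the domain of the third branch; (iii) W_a(1/2) − x*_r = ra·[s₁s₂−s₁−s₂+a(qs₁+ps₂−p−q+pqa)] / ((s₁−1+pa)(s₂+qa)) < 0; and (iv) W_a([x*_l, x*_r]) ⊆ [x*_l, x*_r]. Moreover x*_l → 1/2 and x*_r → 1/2 as a → 0⁺. -/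

import Mathlib

open MeasureTheory Filter Topology

/-- The W-like map `W_a` with parameters `s₁ s₂ p q r` and perturbation `a`. -/
noncomputable def Wmap (s₁ s₂ p q r a : ℝ) (x : ℝ) : ℝ :=
  if x < 1/2 - (1/2 + r*a)/(s₁ + p*a) then
    1 - (2*(s₁ + p*a)/(s₁ - 1 + p*a - 2*r*a)) * x
  else if x < 1/2 then
    (s₁ + p*a)*(x - 1/2) + 1/2 + r*a
  else if x < 1/2 + (1/2 + r*a)/(s₂ + q*a) then
    -(s₂ + q*a)*(x - 1/2) + 1/2 + r*a
  else
    1 + (2*(s₂ + q*a)/(s₂ - 1 + q*a - 2*r*a)) * (x - 1)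

/-- The fixed point of the second branch of `W_a`. -/
noncomputable def xl (s₁ p r a : ℝ) : ℝ :=
  (s₁ - 1 + p*a - 2*r*a)/(2*(s₁ - 1 + p*a))

/-- The preimage of `xl` under the third branch of `W_a`. -/
noncomputable def xr (s₁ s₂ p q r a : ℝ) : ℝ :=
  (s₂*s₁ - s₂ + (2*r*s₁ - q + p*s₂ + q*s₁)*a + (2*r*p + p*q)*a^2)/(2*(s₁ - 1 + p*a)*(s₂ + q*a))

/-!
Let `A = s₁ + p * a` and `B = s₂ + q * a`. Around `1 / 2` the map `W_a` is a tent with slopes `A`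
and `-B` and peak value `1 / 2 + r * a`. It increases on `[xl, 1 / 2]`, decreases on `[1 / 2, xr]`,
and sends both `xl` and `xr` to `xl`, so `[xl, xr]` is invariant as soon as the peak value does not
exceed `xr`. The excess of the peak value over `xr` is
`r * a * (A * B - A - B) / ((A - 1) * B)`, which is negative exactly when `1 / A + 1 / B > 1`;
this condition is open in `a` and holds at `a = 0`.
-/

theorem mapsTo_Icc_of_monotoneOn_of_antitoneOn {α : Type*} [LinearOrder α] {f : α → α} {l c u : α}
    (hmono : MonotoneOn f (Set.Icc l c)) (hanti : AntitoneOn f (Set.Icc c u))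
    (hl : l ≤ f l) (hu : l ≤ f u) (hc : f c ≤ u) :
    Set.MapsTo f (Set.Icc l u) (Set.Icc l u) := by
  rintro x ⟨hlx, hxu⟩
  rcases le_total x c with hxc | hcx
  · have hlc := hlx.trans hxc
    exact ⟨hl.trans (hmono (Set.left_mem_Icc.2 hlc) ⟨hlx, hxc⟩ hlx),
      (hmono ⟨hlx, hxc⟩ (Set.right_mem_Icc.2 hlc) hxc).trans hc⟩
  · have hcu := hcx.trans hxu
    exact ⟨hu.trans (hanti ⟨hcx, hxu⟩ (Set.right_mem_Icc.2 hcu) hxu),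
      (hanti (Set.left_mem_Icc.2 hcu) ⟨hcx, hxu⟩ hcx).trans hc⟩

section FixedParameter

variable {s₁ s₂ p q r a : ℝ}

theorem xl_eq_half_sub (hA : s₁ - 1 + p * a ≠ 0) :
    xl s₁ p r a = 1 / 2 - r * a / (s₁ - 1 + p * a) := by
  unfold xl
  field_simp

theorem second_branch_xl (hA : s₁ - 1 + p * a ≠ 0) :
    (s₁ + p * a) * (xl s₁ p r a - 1 / 2) + 1 / 2 + r * a = xl s₁ p r a := by
  rw [xl_eq_half_sub hA]
  field_simp
  ring

theorem xr_eq_half_add (hA : s₁ - 1 + p * a ≠ 0) (hB : s₂ + q * a ≠ 0) :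
    xr s₁ s₂ p q r a = 1 / 2 + (1 / 2 + r * a - xl s₁ p r a) / (s₂ + q * a) := by
  unfold xr xl
  field_simp
  ring

theorem third_branch_xr (hA : s₁ - 1 + p * a ≠ 0) (hB : s₂ + q * a ≠ 0) :
    -(s₂ + q * a) * (xr s₁ s₂ p q r a - 1 / 2) + 1 / 2 + r * a = xl s₁ p r a := by
  rw [xr_eq_half_add hA hB]
  field_simp
  ring

theorem half_add_sub_xr (hA : s₁ - 1 + p * a ≠ 0) (hB : s₂ + q * a ≠ 0) :
    1 / 2 + r * a - xr s₁ s₂ p q r a =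
      r * a * (s₁ * s₂ - s₁ - s₂ + a * (q * s₁ + p * s₂ - p - q + p * q * a)) /
        ((s₁ - 1 + p * a) * (s₂ + q * a)) := by
  rw [eq_div_iff (mul_ne_zero hA hB)]
  linear_combination (s₁ - 1 + p * a) * third_branch_xr (r := r) hA hB +
    second_branch_xl (r := r) hA

theorem half_add_lt_xr (hA : 0 < s₁ - 1 + p * a) (hB : 0 < s₂ + q * a) (hra : 0 < r * a)
    (hneg : s₁ * s₂ - s₁ - s₂ + a * (q * s₁ + p * s₂ - p - q + p * q * a) < 0) :
    1 / 2 + r * a < xr s₁ s₂ p q r a := by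
  rw [← sub_neg, half_add_sub_xr hA.ne' hB.ne']
  exact div_neg_of_neg_of_pos (mul_neg_of_pos_of_neg hra hneg) (by positivity)

theorem xl_le_half (hA : 0 < s₁ - 1 + p * a) (hra : 0 ≤ r * a) : xl s₁ p r a ≤ 1 / 2 := by
  rw [xl_eq_half_sub hA.ne']
  exact sub_le_self _ (by positivity)

theorem xl_lt_half (hA : 0 < s₁ - 1 + p * a) (hra : 0 < r * a) : xl s₁ p r a < 1 / 2 := by
  rw [xl_eq_half_sub hA.ne']
  exact sub_lt_self _ (by positivity)

theorem second_branch_start_le_xl (hA : 0 < s₁ - 1 + p * a) (hxl : 0 ≤ xl s₁ p r a) :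
    1 / 2 - (1 / 2 + r * a) / (s₁ + p * a) ≤ xl s₁ p r a := by
  rw [sub_le_comm, le_div_iff₀ (by linarith)]
  linarith [second_branch_xl (r := r) hA.ne']

theorem half_le_xr (hA : 0 < s₁ - 1 + p * a) (hB : 0 < s₂ + q * a) (hra : 0 ≤ r * a) :
    1 / 2 ≤ xr s₁ s₂ p q r a := by
  rw [xr_eq_half_add hA.ne' hB.ne']
  have hxl := xl_le_half hA hra
  exact le_add_of_nonneg_right (div_nonneg (by linarith) hB.le)

theorem xr_lt_third_branch_end (hA : s₁ - 1 + p * a ≠ 0) (hB : 0 < s₂ + q * a)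
    (hxl : 0 < xl s₁ p r a) :
    xr s₁ s₂ p q r a < 1 / 2 + (1 / 2 + r * a) / (s₂ + q * a) := by
  rw [xr_eq_half_add hA hB.ne']
  gcongr
  exact sub_lt_self _ hxl

theorem Wmap_eqOn_third_branch (h : 0 ≤ (1 / 2 + r * a) / (s₁ + p * a)) :
    Set.EqOn (Wmap s₁ s₂ p q r a) (fun x ↦ -(s₂ + q * a) * (x - 1 / 2) + 1 / 2 + r * a)
      (Set.Ico (1 / 2) (1 / 2 + (1 / 2 + r * a) / (s₂ + q * a))) := by
  rintro x ⟨hlo, hhi⟩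
  simp only [Wmap, if_neg ((sub_le_self _ h).trans hlo).not_gt, if_neg hlo.not_gt, if_pos hhi]

theorem Wmap_half (hA : 0 ≤ (1 / 2 + r * a) / (s₁ + p * a))
    (hB : 0 < (1 / 2 + r * a) / (s₂ + q * a)) :
    Wmap s₁ s₂ p q r a (1 / 2) = 1 / 2 + r * a := by
  simpa using Wmap_eqOn_third_branch hA (Set.left_mem_Ico.2 (lt_add_of_pos_right _ hB))

-- The right endpoint is included because the two middle branches agree at `1 / 2`.
theorem Wmap_eqOn_second_branch (h : 0 < (1 / 2 + r * a) / (s₂ + q * a)) :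
    Set.EqOn (Wmap s₁ s₂ p q r a) (fun x ↦ (s₁ + p * a) * (x - 1 / 2) + 1 / 2 + r * a)
      (Set.Icc (1 / 2 - (1 / 2 + r * a) / (s₁ + p * a)) (1 / 2)) := by
  rintro x ⟨hlo, hhi⟩
  rcases hhi.lt_or_eq with hlt | rfl
  · simp only [Wmap, if_neg hlo.not_gt, if_pos hlt]
  · rw [Wmap_half ((sub_le_self_iff _).1 hlo) h]
    ring

theorem Wmap_eqOn_Icc_xl_half (hA : 0 < s₁ - 1 + p * a) (hB : 0 < s₂ + q * a) (hra : 0 ≤ r * a)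
    (hxl : 0 ≤ xl s₁ p r a) :
    Set.EqOn (Wmap s₁ s₂ p q r a) (fun x ↦ (s₁ + p * a) * (x - 1 / 2) + 1 / 2 + r * a)
      (Set.Icc (xl s₁ p r a) (1 / 2)) :=
  (Wmap_eqOn_second_branch (by positivity)).mono
    (Set.Icc_subset_Icc_left (second_branch_start_le_xl hA hxl))

theorem Wmap_eqOn_Icc_half_xr (hA : 0 < s₁ - 1 + p * a) (hB : 0 < s₂ + q * a) (hra : 0 ≤ r * a)
    (hxl : 0 < xl s₁ p r a) :
    Set.EqOn (Wmap s₁ s₂ p q r a) (fun x ↦ -(s₂ + q * a) * (x - 1 / 2) + 1 / 2 + r * a)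
      (Set.Icc (1 / 2) (xr s₁ s₂ p q r a)) :=
  (Wmap_eqOn_third_branch (div_nonneg (by positivity) (by linarith))).mono
    (Set.Icc_subset_Ico_right (xr_lt_third_branch_end hA.ne' hB hxl))

theorem Wmap_xl (hA : 0 < s₁ - 1 + p * a) (hB : 0 < s₂ + q * a) (hra : 0 ≤ r * a)
    (hxl : 0 ≤ xl s₁ p r a) :
    Wmap s₁ s₂ p q r a (xl s₁ p r a) = xl s₁ p r a :=
  (Wmap_eqOn_Icc_xl_half hA hB hra hxl (Set.left_mem_Icc.2 (xl_le_half hA hra))).trans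
    (second_branch_xl hA.ne')

theorem Wmap_xr (hA : 0 < s₁ - 1 + p * a) (hB : 0 < s₂ + q * a) (hra : 0 ≤ r * a)
    (hxl : 0 < xl s₁ p r a) :
    Wmap s₁ s₂ p q r a (xr s₁ s₂ p q r a) = xl s₁ p r a :=
  (Wmap_eqOn_Icc_half_xr hA hB hra hxl (Set.right_mem_Icc.2 (half_le_xr hA hB hra))).trans
    (third_branch_xr hA.ne' hB.ne')

theorem mapsTo_Wmap_Icc_xl_xr (hA : 0 < s₁ - 1 + p * a) (hB : 0 < s₂ + q * a) (hra : 0 ≤ r * a)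
    (hxl : 0 < xl s₁ p r a)
    (hpeak : Wmap s₁ s₂ p q r a (1 / 2) ≤ xr s₁ s₂ p q r a) :
    Set.MapsTo (Wmap s₁ s₂ p q r a)
      (Set.Icc (xl s₁ p r a) (xr s₁ s₂ p q r a))
      (Set.Icc (xl s₁ p r a) (xr s₁ s₂ p q r a)) := by
  have hmono : MonotoneOn (Wmap s₁ s₂ p q r a) (Set.Icc (xl s₁ p r a) (1 / 2)) := by
    refine MonotoneOn.congr (fun x _ y _ hxy ↦ ?_) (Wmap_eqOn_Icc_xl_half hA hB hra hxl.le).symm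
    have hslope : 0 ≤ s₁ + p * a := by linarith
    gcongr
  have hanti : AntitoneOn (Wmap s₁ s₂ p q r a) (Set.Icc (1 / 2) (xr s₁ s₂ p q r a)) := by
    refine AntitoneOn.congr (fun x _ y _ hxy ↦ ?_) (Wmap_eqOn_Icc_half_xr hA hB hra hxl).symm
    simp only [neg_mul]
    gcongr
  exact mapsTo_Icc_of_monotoneOn_of_antitoneOn hmono hanti
    (Wmap_xl hA hB hra hxl.le).ge (Wmap_xr hA hB hra hxl).ge hpeak

end FixedParameter

section SmallParameter

variable {s₁ s₂ : ℝ}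

theorem eventually_add_mul_pos {c : ℝ} (hc : 0 < c) (k : ℝ) : ∀ᶠ a in 𝓝 (0:ℝ), 0 < c + k * a :=
  (Continuous.tendsto' (by fun_prop) 0 c (by simp)).eventually_const_lt hc

theorem tendsto_xl (hs₁ : s₁ ≠ 1) (p r : ℝ) :
    Tendsto (fun a ↦ xl s₁ p r a) (𝓝 0) (𝓝 (1 / 2)) := by
  have hA : s₁ - 1 + p * 0 ≠ 0 := by simpa [sub_eq_zero] using hs₁
  have hcont : ContinuousAt (fun a ↦ xl s₁ p r a) 0 :=
    ContinuousAt.div (by fun_prop) (by fun_prop) (mul_ne_zero two_ne_zero hA)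
  simpa [xl_eq_half_sub hA] using hcont.tendsto

theorem tendsto_xr (hs₁ : s₁ ≠ 1) (hs₂ : s₂ ≠ 0) (p q r : ℝ) :
    Tendsto (fun a ↦ xr s₁ s₂ p q r a) (𝓝 0) (𝓝 (1 / 2)) := by
  have hA : s₁ - 1 + p * 0 ≠ 0 := by simpa [sub_eq_zero] using hs₁
  have hB : s₂ + q * 0 ≠ 0 := by simpa using hs₂
  have hcont : ContinuousAt (fun a ↦ xr s₁ s₂ p q r a) 0 :=
    ContinuousAt.div (by fun_prop) (by fun_prop) (mul_ne_zero (mul_ne_zero two_ne_zero hA) hB)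
  simpa [xr_eq_half_add hA hB, xl_eq_half_sub hA] using hcont.tendsto

theorem pos_of_one_lt_one_div_add_one_div (hs₁ : 1 < s₁) (hsum : 1 < 1 / s₁ + 1 / s₂) : 0 < s₂ := by
  have hinv : 1 / s₁ < 1 := (div_lt_one (by linarith)).2 hs₁
  exact one_div_pos.1 (by linarith)

theorem mul_sub_sub_neg_of_one_lt_one_div_add_one_div (hs₁ : 0 < s₁) (hs₂ : 0 < s₂)
    (hsum : 1 < 1 / s₁ + 1 / s₂) : s₁ * s₂ - s₁ - s₂ < 0 := by
  rw [div_add_div _ _ hs₁.ne' hs₂.ne', one_lt_div (by positivity)] at hsum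
  linarith

theorem eventually_half_add_lt_xr (hs₁ : 1 < s₁) (hs₂ : 0 < s₂) (hsum : 1 < 1 / s₁ + 1 / s₂)
    (p q : ℝ) {r : ℝ} (hr : 0 < r) :
    ∀ᶠ a in 𝓝[>] (0:ℝ), 1 / 2 + r * a < xr s₁ s₂ p q r a := by
  have hneg₀ := mul_sub_sub_neg_of_one_lt_one_div_add_one_div (by linarith) hs₂ hsum
  have hneg : ∀ᶠ a in 𝓝 (0:ℝ),
      s₁ * s₂ - s₁ - s₂ + a * (q * s₁ + p * s₂ - p - q + p * q * a) < 0 :=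
    (Continuous.tendsto' (by fun_prop) 0 _ (by simp)).eventually_lt_const hneg₀
  filter_upwards [self_mem_nhdsWithin,
    (eventually_add_mul_pos (sub_pos.2 hs₁) p).filter_mono nhdsWithin_le_nhds,
    (eventually_add_mul_pos hs₂ q).filter_mono nhdsWithin_le_nhds,
    hneg.filter_mono nhdsWithin_le_nhds] with a ha hA hB hneg
  exact half_add_lt_xr hA hB (mul_pos hr ha) hneg

end SmallParameter

theorem Wmap_invariant_interval_general
    (s₁ s₂ p q r : ℝ) (hs₁ : 1 < s₁) (hr : 0 < r) (hsum : 1 < 1 / s₁ + 1 / s₂) :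
    (∃ a₀ > (0:ℝ), ∀ a, 0 < a → a < a₀ →
      (Wmap s₁ s₂ p q r a (xl s₁ p r a) = xl s₁ p r a ∧
        1 / 2 - (1 / 2 + r * a) / (s₁ + p * a) ≤ xl s₁ p r a ∧ xl s₁ p r a < 1 / 2) ∧
      (Wmap s₁ s₂ p q r a (xr s₁ s₂ p q r a) = xl s₁ p r a ∧
        1 / 2 ≤ xr s₁ s₂ p q r a ∧
        xr s₁ s₂ p q r a < 1 / 2 + (1 / 2 + r * a) / (s₂ + q * a)) ∧
      (Wmap s₁ s₂ p q r a (1 / 2) - xr s₁ s₂ p q r a =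
          r * a * (s₁ * s₂ - s₁ - s₂ + a * (q * s₁ + p * s₂ - p - q + p * q * a)) /
            ((s₁ - 1 + p * a) * (s₂ + q * a)) ∧
        Wmap s₁ s₂ p q r a (1 / 2) - xr s₁ s₂ p q r a < 0) ∧
      Set.MapsTo (Wmap s₁ s₂ p q r a)
        (Set.Icc (xl s₁ p r a) (xr s₁ s₂ p q r a))
        (Set.Icc (xl s₁ p r a) (xr s₁ s₂ p q r a))) ∧
    Tendsto (fun a ↦ xl s₁ p r a) (𝓝[>] (0:ℝ)) (𝓝 (1 / 2)) ∧
    Tendsto (fun a ↦ xr s₁ s₂ p q r a) (𝓝[>] (0:ℝ)) (𝓝 (1 / 2)) := by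
  have hs₂ : 0 < s₂ := pos_of_one_lt_one_div_add_one_div hs₁ hsum
  have hxl_tendsto := tendsto_xl hs₁.ne' p r
  have hxr_tendsto := tendsto_xr hs₁.ne' hs₂.ne' p q r
  refine ⟨?_, hxl_tendsto.mono_left nhdsWithin_le_nhds, hxr_tendsto.mono_left nhdsWithin_le_nhds⟩
  have hpos := (eventually_add_mul_pos (sub_pos.2 hs₁) p).and
    ((eventually_add_mul_pos hs₂ q).and (hxl_tendsto.eventually_const_lt one_half_pos))
  obtain ⟨a₀, ha₀, hIoo⟩ := mem_nhdsGT_iff_exists_Ioo_subset.1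
    ((hpos.filter_mono nhdsWithin_le_nhds).and (eventually_half_add_lt_xr hs₁ hs₂ hsum p q hr))
  refine ⟨a₀, ha₀, fun a ha haa₀ ↦ ?_⟩
  obtain ⟨⟨hA, hB, hxl⟩, hgap⟩ := hIoo ⟨ha, haa₀⟩
  have hra : 0 < r * a := mul_pos hr ha
  have hhalf : Wmap s₁ s₂ p q r a (1 / 2) = 1 / 2 + r * a :=
    Wmap_half (div_nonneg (by positivity) (by linarith)) (by positivity)
  rw [← hhalf] at hgap
  exact ⟨⟨Wmap_xl hA hB hra.le hxl.le, second_branch_start_le_xl hA hxl.le, xl_lt_half hA hra⟩,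
    ⟨Wmap_xr hA hB hra.le hxl, half_le_xr hA hB hra.le, xr_lt_third_branch_end hA.ne' hB hxl⟩,
    ⟨hhalf ▸ half_add_sub_xr hA.ne' hB.ne', sub_neg.2 hgap⟩,
    mapsTo_Wmap_Icc_xl_xr hA hB hra.le hxl hgap.le⟩

/-- If `1/s₁ + 1/s₂ > 1`, then for sufficiently small `a > 0`: `xl` is a fixed point on the
second branch, `xr` is the preimage of `xl` on the third branch, `W_a(1/2) < xr` with the
explicit formula for `W_a(1/2) − xr`, and `[xl, xr]` is invariant under `W_a`; moreover
`xl → 1/2` and `xr → 1/2` as `a → 0⁺`. -/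
theorem Wmap_invariant_interval
    (s₁ s₂ p q r : ℝ) (hs₁ : 1 < s₁) (hs₂ : 1 < s₂)
    (hp : 0 < p) (hq : 0 < q) (hr : 0 < r)
    (hsum : 1 < 1/s₁ + 1/s₂) :
    (∃ a₀ > (0:ℝ), ∀ a, 0 < a → a < a₀ →
      (Wmap s₁ s₂ p q r a (xl s₁ p r a) = xl s₁ p r a ∧
        1/2 - (1/2 + r*a)/(s₁ + p*a) ≤ xl s₁ p r a ∧ xl s₁ p r a < 1/2) ∧
      (Wmap s₁ s₂ p q r a (xr s₁ s₂ p q r a) = xl s₁ p r a ∧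
        1/2 ≤ xr s₁ s₂ p q r a ∧
        xr s₁ s₂ p q r a < 1/2 + (1/2 + r*a)/(s₂ + q*a)) ∧
      (Wmap s₁ s₂ p q r a (1/2) - xr s₁ s₂ p q r a =
          r*a*(s₁*s₂ - s₁ - s₂ + a*(q*s₁ + p*s₂ - p - q + p*q*a)) /
            ((s₁ - 1 + p*a)*(s₂ + q*a)) ∧
        Wmap s₁ s₂ p q r a (1/2) - xr s₁ s₂ p q r a < 0) ∧
      Set.MapsTo (Wmap s₁ s₂ p q r a)
        (Set.Icc (xl s₁ p r a) (xr s₁ s₂ p q r a))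
        (Set.Icc (xl s₁ p r a) (xr s₁ s₂ p q r a))) ∧
    Tendsto (fun a => xl s₁ p r a) (𝓝[>] (0:ℝ)) (𝓝 (1/2)) ∧
    Tendsto (fun a => xr s₁ s₂ p q r a) (𝓝[>] (0:ℝ)) (𝓝 (1/2)) :=
  Wmap_invariant_interval_general s₁ s₂ p q r hs₁ hr hsum
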